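/- arXiv:0812.4740 — 6 statements merged into one kernel-verified Lean document; each statement's English description precedes it below -/
import Mathlib

section
/- For every m-polynomial kernel semigroup (p_t) on S there exists a linear endomorphism A of V such that for all t ≥ 0, all f ∈ V and all x ∈ S one has ∫_S f(ξ) p_t(x, dξ) = (exp(tA) f)(x), where exp(tA) is the exponential of A on the finite-dimensional space V. -/
/-!
The moment operators `T t f = (x ↦ ∫ f d(p t x))` are well defined linear endomorphisms of the
finite-dimensional space `V` of polynomials of degree at most `m`, because `V` separates on `S`.
The Chapman–Kolmogorov identity makes them a semigroup. The kernels are not assumed measurable in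
the starting point, but `Measure.bind` returns `0` for a family that is not a.e.-measurable, while
`p (t + s) x` is a probability measure; hence `p s` is automatically a.e.-measurable for `p t x`
(`MPolyKernelSemigroup.aemeasurable_p`), and Fubini applies.

On the finite-dimensional space `End V` the evaluations `B ↦ (B f)(x)` jointly separate points, so
they induce its norm topology and pointwise continuity of the moments at `0` is norm continuity of
`T` at `0`. A one-parameter semigroup in a Banach algebra that is norm continuous at `0` is an
exponential (`exists_eq_exp_of_semigroup`): it is continuous on `[0, ∞)`, the element
`M = ∫₀^δ T` is invertible for small `δ`, and `T t * M = ∫ₜ^{t+δ} T` shows that `T` is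
differentiable with `T' = T * A`, where `A = (T δ - 1) * M⁻¹`; therefore `T t * exp (-t A)` is
constant.
-/


open MeasureTheory MvPolynomial

/-- An `m`-polynomial kernel semigroup on a set `S ⊆ ℝ^n`: a family of Markov kernels
from `S` to `S` satisfying `p₀(x,·) = δ_x` and Chapman–Kolmogorov, such that polynomials
of total degree `≤ m` separate on `S`, are integrable with respect to each `p_t(x,·)`,
are mapped by the semigroup to (restrictions of) polynomials of total degree `≤ m`, and
whose moments are continuous in `t` at `t = 0`. -/
structure MPolyKernelSemigroup (n m : ℕ) where
  S : Set (Fin n → ℝ)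
  nonempty : S.Nonempty
  measurableSet : MeasurableSet S
  p : ℝ → (Fin n → ℝ) → Measure (Fin n → ℝ)
  isProb : ∀ t : ℝ, 0 ≤ t → ∀ x ∈ S, IsProbabilityMeasure (p t x)
  supported : ∀ t : ℝ, 0 ≤ t → ∀ x ∈ S, p t x Sᶜ = 0
  dirac_zero : ∀ x ∈ S, p 0 x = Measure.dirac x
  chapman : ∀ s : ℝ, 0 ≤ s → ∀ t : ℝ, 0 ≤ t → ∀ x ∈ S,
    p (t + s) x = (p t x).bind (p s)
  separating : ∀ f : MvPolynomial (Fin n) ℝ, f.totalDegree ≤ m →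
    (∀ x ∈ S, eval x f = 0) → f = 0
  integrable : ∀ t : ℝ, 0 ≤ t → ∀ x ∈ S, ∀ f : MvPolynomial (Fin n) ℝ,
    f.totalDegree ≤ m → Integrable (fun ξ => eval ξ f) (p t x)
  polyMap : ∀ t : ℝ, 0 ≤ t → ∀ f : MvPolynomial (Fin n) ℝ, f.totalDegree ≤ m →
    ∃ g : MvPolynomial (Fin n) ℝ, g.totalDegree ≤ m ∧
      ∀ x ∈ S, (∫ ξ, eval ξ f ∂(p t x)) = eval x g
  contZero : ∀ f : MvPolynomial (Fin n) ℝ, f.totalDegree ≤ m → ∀ x ∈ S,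
    ContinuousWithinAt (fun t => ∫ ξ, eval ξ f ∂(p t x)) (Set.Ici 0) 0

section

open Filter Topology Set

/-! ### Norm-continuous semigroups in Banach algebras -/

/-- Left continuity at `t` needs no local bound on `T`: near `0` the values `T h` are invertible, so
`T (t - h) = T t * (T h)⁻¹`, and inversion is continuous at `1`. -/
theorem semigroup_continuousOn {𝔸 : Type*} [NormedRing 𝔸] [CompleteSpace 𝔸]
    (T : ℝ → 𝔸) (h0 : T 0 = 1) (hadd : ∀ t, 0 ≤ t → ∀ s, 0 ≤ s → T (t + s) = T t * T s)
    (hc : ContinuousWithinAt T (Ici 0) 0) : ContinuousOn T (Ici 0) := by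
  intro t ht
  have hR : ContinuousAt (Ring.inverse : 𝔸 → 𝔸) 1 := by
    simpa using NormedRing.inverse_continuousAt (1 : 𝔸ˣ)
  have hc' : Tendsto T (𝓝[Ici 0] 0) (𝓝 1) := by simpa [ContinuousWithinAt, h0] using hc
  have h1 : Tendsto (fun s => max (s - t) 0) (𝓝[Ici 0] t) (𝓝[Ici 0] 0) := by
    refine tendsto_nhdsWithin_iff.2 ⟨?_, .of_forall fun s => mem_Ici.2 (le_max_right _ _)⟩
    have : Continuous fun s : ℝ => max (s - t) 0 := by fun_prop
    simpa using (this.tendsto t).mono_left nhdsWithin_le_nhds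
  have h2 : Tendsto (fun s => max (t - s) 0) (𝓝[Ici 0] t) (𝓝[Ici 0] 0) := by
    refine tendsto_nhdsWithin_iff.2 ⟨?_, .of_forall fun s => mem_Ici.2 (le_max_right _ _)⟩
    have : Continuous fun s : ℝ => max (t - s) 0 := by fun_prop
    simpa using (this.tendsto t).mono_left nhdsWithin_le_nhds
  have hu : ∀ᶠ s in 𝓝[Ici 0] t, IsUnit (T (max (t - s) 0)) :=
    (hc'.comp h2).eventually (Units.isOpen.mem_nhds isUnit_one)
  have h3 : Tendsto (fun s => T t * T (max (s - t) 0) * Ring.inverse (T (max (t - s) 0)))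
      (𝓝[Ici 0] t) (𝓝 (T t * 1 * Ring.inverse 1)) :=
    ((hc'.comp h1).const_mul (T t)).mul (hR.tendsto.comp (hc'.comp h2))
  rw [Ring.inverse_one, mul_one, mul_one] at h3
  refine h3.congr' ?_
  filter_upwards [hu, self_mem_nhdsWithin] with s hs hs0
  rcases le_total t s with hts | hts
  · rw [max_eq_left (sub_nonneg.2 hts), max_eq_right (sub_nonpos.2 hts), h0, Ring.inverse_one,
      mul_one, ← hadd t ht _ (sub_nonneg.2 hts), add_sub_cancel]
  · rw [max_eq_left (sub_nonneg.2 hts)] at hs ⊢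
    have := hadd s hs0 _ (sub_nonneg.2 hts)
    rw [add_sub_cancel] at this
    rw [max_eq_right (sub_nonpos.2 hts), h0, mul_one, this, mul_assoc,
      Ring.mul_inverse_cancel _ hs, mul_one]

theorem exists_eq_exp_of_semigroup {𝔸 : Type*} [NormedRing 𝔸] [NormedAlgebra ℝ 𝔸]
    [CompleteSpace 𝔸] (T : ℝ → 𝔸) (h0 : T 0 = 1)
    (hadd : ∀ t, 0 ≤ t → ∀ s, 0 ≤ s → T (t + s) = T t * T s)
    (hc : ContinuousWithinAt T (Ici 0) 0) :
    ∃ A : 𝔸, ∀ t, 0 ≤ t → T t = NormedSpace.exp (t • A) := by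
  -- `U` extends `T` continuously to the whole line.
  set U : ℝ → 𝔸 := fun t => T (max t 0) with hU
  have hUT : ∀ t, 0 ≤ t → U t = T t := fun t ht => by simp [hU, ht]
  have hUc : Continuous U :=
    (semigroup_continuousOn T h0 hadd hc).comp_continuous (by fun_prop) fun t => mem_Ici.2 (le_max_right _ _)
  set F : ℝ → 𝔸 := fun u => ∫ r in (0 : ℝ)..u, U r with hF
  have hFd : ∀ u, HasDerivAt F (U u) u := fun u => (hUc.integral_hasStrictDerivAt 0 u).hasDerivAt
  obtain ⟨δ, hδ, M, hM⟩ : ∃ δ : ℝ, 0 < δ ∧ IsUnit (F δ) := by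
    have h1 : Tendsto (slope F 0) (𝓝[>] 0) (𝓝 1) := by
      have := (hFd 0).tendsto_slope
      rw [hUT 0 le_rfl, h0] at this
      exact this.mono_left (nhdsWithin_mono _ fun x hx => ne_of_gt hx)
    obtain ⟨δ, hδu, hδ⟩ := ((h1.eventually (Units.isOpen.mem_nhds isUnit_one)).and
      self_mem_nhdsWithin).exists
    have hδ' : (0 : ℝ) < δ := hδ
    refine ⟨δ, hδ', ?_⟩
    have h2 : F δ = δ • slope F 0 δ := by
      simp [slope_def_module, hF, smul_smul, hδ'.ne']
    rw [h2]
    exact (isUnit_smul_iff (Units.mk0 δ hδ'.ne') _).2 hδu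
  have hTM : ∀ t, 0 ≤ t → T t * M = F (t + δ) - F t := by
    intro t ht
    rw [hM]
    simp only [hF]
    rw [intervalIntegral.integral_interval_sub_left (hUc.intervalIntegrable _ _)
      (hUc.intervalIntegrable _ _)]
    have hmul := (ContinuousLinearMap.mul ℝ 𝔸 (T t)).intervalIntegral_comp_comm
      (hUc.intervalIntegrable (μ := volume) 0 δ)
    simp only [ContinuousLinearMap.mul_apply'] at hmul
    rw [← hmul]
    have := intervalIntegral.integral_comp_add_left (f := U) (a := 0) (b := δ) t
    rw [add_zero] at this
    rw [← this]
    refine intervalIntegral.integral_congr fun r hr => ?_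
    rw [uIcc_of_le hδ.le] at hr
    simp only [hUT r hr.1, hUT _ (add_nonneg ht hr.1), hadd t ht r hr.1]
  set A : 𝔸 := (T δ - 1) * ↑M⁻¹ with hA
  set G : ℝ → 𝔸 := fun t => (F (t + δ) - F t) * ↑M⁻¹ with hG
  have hGT : ∀ t, 0 ≤ t → G t = T t := fun t ht => by
    simp only [hG, ← hTM t ht, Units.mul_inv_cancel_right]
  have hGd : ∀ t, 0 ≤ t → HasDerivAt G (T t * A) t := by
    intro t ht
    have h := (((hFd (t + δ)).comp_add_const t δ).sub (hFd t)).mul_const (↑M⁻¹ : 𝔸)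
    rw [hUT _ (add_nonneg ht hδ.le), hUT _ ht, hadd t ht δ hδ.le] at h
    rw [hA, ← mul_assoc, mul_sub, mul_one]
    exact h
  refine ⟨A, fun t ht => ?_⟩
  have hE : ∀ s, HasDerivAt (fun s : ℝ => NormedSpace.exp (s • (-A)))
      (-A * NormedSpace.exp (s • (-A))) s := fun s => hasDerivAt_exp_smul_const' (-A) s
  have hD : ∀ s, 0 ≤ s → HasDerivAt (fun s : ℝ => G s * NormedSpace.exp (s • (-A))) 0 s := by
    intro s hs
    have h := (hGd s hs).mul (hE s)
    rw [hGT s hs] at h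
    refine h.congr_deriv ?_
    noncomm_ring
  have hconst := constant_of_has_deriv_right_zero (a := 0) (b := t)
    (fun s hs => (hD s hs.1).continuousAt.continuousWithinAt)
    (fun s hs => (hD s hs.1).hasDerivWithinAt) t ⟨ht, le_rfl⟩
  simp only [hGT t ht, hGT 0 le_rfl, h0, zero_smul, NormedSpace.exp_zero, mul_one] at hconst
  have hinv : NormedSpace.exp (t • (-A)) * NormedSpace.exp (t • A) = 1 := by
    let _ : NormedAlgebra ℚ 𝔸 := NormedAlgebra.restrictScalars ℚ ℝ 𝔸
    rw [← NormedSpace.exp_add_of_commute (by simp), smul_neg, neg_add_cancel,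
      NormedSpace.exp_zero]
  calc T t = T t * (NormedSpace.exp (t • (-A)) * NormedSpace.exp (t • A)) := by
        rw [hinv, mul_one]
    _ = NormedSpace.exp (t • A) := by rw [← mul_assoc, hconst, one_mul]

/-! ### Weakly continuous semigroups on finite-dimensional spaces -/

/-- A semigroup of endomorphisms of a finite-dimensional space is an exponential as soon as it is
weakly continuous at `0` against a family of linear functionals separating points. The exponential
is stated through its series, so that the conclusion refers to no norm on `V`. -/
theorem exists_generator_of_weak_continuity {V ι : Type*} [AddCommGroup V] [Module ℝ V]
    [Module.Finite ℝ V] (φ : ι → V →ₗ[ℝ] ℝ) (hφ : ∀ f, (∀ i, φ i f = 0) → f = 0)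
    (T : ℝ → Module.End ℝ V) (h0 : T 0 = 1)
    (hadd : ∀ t, 0 ≤ t → ∀ s, 0 ≤ s → T (t + s) = T t * T s)
    (hc : ∀ f i, ContinuousWithinAt (fun t => φ i (T t f)) (Ici 0) 0) :
    ∃ A : Module.End ℝ V, ∀ t, 0 ≤ t → ∀ f i,
      HasSum (fun j : ℕ => t ^ j / (j.factorial : ℝ) * φ i ((A ^ j) f)) (φ i (T t f)) := by
  -- Any norm on `V` will do; this one is the sup norm of coordinates.
  let e := (Module.finBasis ℝ V).equivFun
  let _ : NormedAddCommGroup V := NormedAddCommGroup.induced V _ e.toLinearMap e.injective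
  let _ : NormedSpace ℝ V := NormedSpace.induced ℝ V _ e.toLinearMap
  have : CompleteSpace V := FiniteDimensional.complete ℝ V
  let Φ := Module.End.toContinuousLinearMap V (𝕜 := ℝ)
  have hΦ : ∀ B f, Φ B f = B f := fun B f => rfl
  let ev : (V →L[ℝ] V) →ₗ[ℝ] (V × ι → ℝ) :=
    LinearMap.pi fun q => (φ q.2).comp (ContinuousLinearMap.apply ℝ V q.1).toLinearMap
  have hev : ∀ B q, ev B q = φ q.2 (B q.1) := fun B q => rfl
  have hker : LinearMap.ker ev = ⊥ := by
    refine LinearMap.ker_eq_bot'.2 fun B hB => ?_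
    ext f
    exact hφ _ fun i => by rw [← hev B (f, i), hB]; rfl
  have hemb := LinearMap.isClosedEmbedding_of_injective hker
  have hcont : ContinuousWithinAt (fun t => Φ (T t)) (Ici 0) 0 := by
    refine hemb.isInducing.tendsto_nhds_iff.2 (tendsto_pi_nhds.2 fun q => ?_)
    exact hc q.1 q.2
  obtain ⟨A, hA⟩ := exists_eq_exp_of_semigroup (fun t => Φ (T t)) (by rw [h0, map_one])
    (fun t ht s hs => by rw [hadd t ht s hs, map_mul]) hcont
  refine ⟨Φ.symm A, fun t ht f i => ?_⟩
  have hs := NormedSpace.exp_series_hasSum_exp' (𝕂 := ℝ) (t • A)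
  rw [← hA t ht] at hs
  have hcts : Continuous fun B : V →L[ℝ] V => ev B (f, i) :=
    (continuous_apply _).comp hemb.continuous
  have hs' := hs.map ((LinearMap.proj (f, i)).comp ev) hcts
  have hpow : ∀ j : ℕ, (A ^ j) f = ((Φ.symm A) ^ j) f := fun j => by
    rw [← map_pow, ← hΦ, AlgEquiv.apply_symm_apply]
  change HasSum _ (φ i (T t f)) at hs'
  refine hs'.congr_fun fun j => ?_
  simp only [Function.comp_apply, LinearMap.comp_apply, map_smul, LinearMap.proj_apply, hev,
    smul_pow, ← hpow, smul_eq_mul]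
  ring

/-! ### Moment operators of a polynomial kernel semigroup -/

namespace MPolyKernelSemigroup

variable {n m : ℕ} (P : MPolyKernelSemigroup n m)

/-- Measurability of the kernel in its starting point is forced by Chapman–Kolmogorov, since
`Measure.bind` of a family that is not a.e.-measurable is `0`. -/
theorem aemeasurable_p {s t : ℝ} (hs : 0 ≤ s) (ht : 0 ≤ t) {x : Fin n → ℝ} (hx : x ∈ P.S) :
    AEMeasurable (P.p s) (P.p t x) := by
  refine AEMeasurable.of_map_ne_zero fun h => ?_
  have hp := P.isProb (t + s) (add_nonneg ht hs) x hx
  refine hp.ne_zero (P.p (t + s) x) ?_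
  rw [P.chapman s hs t ht x hx, Measure.bind, h, Measure.join_zero]

/-- Chapman–Kolmogorov for moments. -/
theorem integral_add {s t : ℝ} (hs : 0 ≤ s) (ht : 0 ≤ t) {x : Fin n → ℝ} (hx : x ∈ P.S)
    {f : MvPolynomial (Fin n) ℝ} (hf : f.totalDegree ≤ m) :
    ∫ ξ, eval ξ f ∂(P.p (t + s) x) = ∫ y, ∫ ξ, eval ξ f ∂(P.p s y) ∂(P.p t x) := by
  have hS : ∀ᵐ y ∂(P.p t x), y ∈ P.S := P.supported t ht x hx
  have hk := P.aemeasurable_p hs ht hx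
  have hint := P.integrable (t + s) (add_nonneg ht hs) x hx f hf
  have hfm : Measurable fun ξ : Fin n → ℝ => eval ξ f := (MvPolynomial.continuous_eval f).measurable
  -- Split into positive and negative parts, to which the Lebesgue-integral version applies.
  have key : ∀ g : (Fin n → ℝ) → ℝ, Measurable g → Integrable g (P.p (t + s) x) →
      Integrable (fun y => (∫⁻ ξ, ENNReal.ofReal (g ξ) ∂(P.p s y)).toReal) (P.p t x) ∧
      (∫⁻ ξ, ENNReal.ofReal (g ξ) ∂(P.p (t + s) x)).toReal =
        ∫ y, (∫⁻ ξ, ENNReal.ofReal (g ξ) ∂(P.p s y)).toReal ∂(P.p t x) := by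
    intro g hg hgi
    have hm : AEMeasurable (fun y => ∫⁻ ξ, ENNReal.ofReal (g ξ) ∂(P.p s y)) (P.p t x) :=
      (Measure.measurable_lintegral hg.ennreal_ofReal).comp_aemeasurable hk
    have hb : ∫⁻ ξ, ENNReal.ofReal (g ξ) ∂(P.p (t + s) x) =
        ∫⁻ y, ∫⁻ ξ, ENNReal.ofReal (g ξ) ∂(P.p s y) ∂(P.p t x) := by
      rw [P.chapman s hs t ht x hx, Measure.lintegral_bind hk hg.ennreal_ofReal.aemeasurable]
    have hfin : ∫⁻ y, ∫⁻ ξ, ENNReal.ofReal (g ξ) ∂(P.p s y) ∂(P.p t x) ≠ ⊤ :=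
      hb ▸ hgi.lintegral_lt_top.ne
    exact ⟨integrable_toReal_of_lintegral_ne_top hm hfin,
      by rw [hb, integral_toReal hm (ae_lt_top' hm hfin)]⟩
  obtain ⟨i1, e1⟩ := key _ hfm hint
  obtain ⟨i2, e2⟩ := key _ hfm.neg hint.neg
  simp only [Pi.neg_apply] at i2 e2
  rw [integral_eq_lintegral_pos_part_sub_lintegral_neg_part hint, e1, e2, ← integral_sub i1 i2]
  refine integral_congr_ae ?_
  filter_upwards [hS] with y hy
  rw [integral_eq_lintegral_pos_part_sub_lintegral_neg_part (P.integrable s hs y hy f hf)]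

theorem ext_on {f g : restrictTotalDegree (Fin n) ℝ m}
    (h : ∀ x ∈ P.S, eval x (f : MvPolynomial (Fin n) ℝ) = eval x (g : MvPolynomial (Fin n) ℝ)) :
    f = g := by
  refine sub_eq_zero.1 (Subtype.ext ?_)
  exact P.separating _ ((mem_restrictTotalDegree _ _ _).1 (f - g).2) fun x hx => by
    simp [h x hx]

/-- For `t ≥ 0`, integration against `p t` is a linear endomorphism of the space of polynomials of
degree at most `m`. -/
theorem exists_operator {t : ℝ} (ht : 0 ≤ t) :
    ∃ T : Module.End ℝ (restrictTotalDegree (Fin n) ℝ m), ∀ f, ∀ x ∈ P.S,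
      eval x (T f : MvPolynomial (Fin n) ℝ) =
        ∫ ξ, eval ξ (f : MvPolynomial (Fin n) ℝ) ∂(P.p t x) := by
  have hdeg (f : restrictTotalDegree (Fin n) ℝ m) : (f : MvPolynomial (Fin n) ℝ).totalDegree ≤ m :=
    (mem_restrictTotalDegree _ _ _).1 f.2
  choose g hg hgx using fun f : restrictTotalDegree (Fin n) ℝ m => P.polyMap t ht f (hdeg f)
  refine ⟨{ toFun := fun f => ⟨g f, (mem_restrictTotalDegree _ _ _).2 (hg f)⟩
            map_add' := fun f₁ f₂ => P.ext_on fun x hx => ?_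
            map_smul' := fun c f => P.ext_on fun x hx => ?_ }, fun f x hx => (hgx f x hx).symm⟩
  · simp only [Submodule.coe_add, map_add, ← hgx _ x hx]
    exact MeasureTheory.integral_add (P.integrable t ht x hx _ (hdeg f₁)) (P.integrable t ht x hx _ (hdeg f₂))
  · simp only [Submodule.coe_smul, smul_eval, ← hgx _ x hx, RingHom.id_apply]
    exact integral_const_mul _ _

end MPolyKernelSemigroup

end

/-- Theorem 2.2, implication (i) ⇒ (ii): for an `m`-polynomial kernel semigroup there is
a linear endomorphism `A` of the space `V` of polynomials of total degree `≤ m` such that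
`∫_S f(ξ) p_t(x, dξ) = (exp(tA) f)(x)` for all `t ≥ 0`, `f ∈ V` and `x ∈ S`; the value
`(exp(tA) f)(x)` is expressed through the (convergent) exponential series evaluated
at `x`. -/
theorem mPolyKernelSemigroup_exp (n m : ℕ) (hn : 1 ≤ n) (P : MPolyKernelSemigroup n m) :
    ∃ A : Module.End ℝ (restrictTotalDegree (Fin n) ℝ m),
      ∀ t : ℝ, 0 ≤ t → ∀ f : restrictTotalDegree (Fin n) ℝ m, ∀ x ∈ P.S,
        HasSum
          (fun j : ℕ => t ^ j / (j.factorial : ℝ) *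
            eval x (((A ^ j) f : restrictTotalDegree (Fin n) ℝ m) : MvPolynomial (Fin n) ℝ))
          (∫ ξ, eval ξ (f : MvPolynomial (Fin n) ℝ) ∂(P.p t x)) := by
  have hdeg (f : restrictTotalDegree (Fin n) ℝ m) : (f : MvPolynomial (Fin n) ℝ).totalDegree ≤ m :=
    (mem_restrictTotalDegree _ _ _).1 f.2
  have hex : ∀ t : ℝ, ∃ T : Module.End ℝ (restrictTotalDegree (Fin n) ℝ m), 0 ≤ t →
      ∀ f, ∀ x ∈ P.S, eval x (T f : MvPolynomial (Fin n) ℝ) =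
        ∫ ξ, eval ξ (f : MvPolynomial (Fin n) ℝ) ∂(P.p t x) := fun t => by
    by_cases ht : 0 ≤ t
    · obtain ⟨T, hT⟩ := P.exists_operator ht
      exact ⟨T, fun _ => hT⟩
    · exact ⟨0, fun h => absurd h ht⟩
  choose T hT using hex
  let φ : P.S → restrictTotalDegree (Fin n) ℝ m →ₗ[ℝ] ℝ := fun x =>
    (MvPolynomial.aeval (x : Fin n → ℝ)).toLinearMap.comp (Submodule.subtype _)
  have hφ : ∀ x f, φ x f = eval (x : Fin n → ℝ) (f : MvPolynomial (Fin n) ℝ) := fun x f => by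
    simp [φ, MvPolynomial.aeval_eq_eval]
  obtain ⟨A, hA⟩ := exists_generator_of_weak_continuity φ
    (fun f hf => P.ext_on fun x hx => by simpa [hφ] using hf ⟨x, hx⟩) T
    (LinearMap.ext fun f => P.ext_on fun x hx => by
      rw [hT 0 le_rfl f x hx, P.dirac_zero x hx, integral_dirac]; rfl)
    (fun t ht s hs => LinearMap.ext fun f => P.ext_on fun x hx => by
      rw [hT _ (add_nonneg ht hs) f x hx, P.integral_add hs ht hx (hdeg f), Module.End.mul_apply,
        hT t ht _ x hx]
      refine integral_congr_ae ?_
      have hS : ∀ᵐ y ∂(P.p t x), y ∈ P.S := P.supported t ht x hx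
      filter_upwards [hS] with y hy
      rw [hT s hs f y hy])
    (fun f x => (P.contZero f (hdeg f) x x.2).congr
      (fun t ht => by rw [hφ, hT t ht f x x.2]) (by rw [hφ, hT 0 le_rfl f x x.2]))
  refine ⟨A, fun t ht f x hx => ?_⟩
  have h := hA t ht f ⟨x, hx⟩
  simp only [hφ] at h
  rwa [hT t ht f x hx] at h
end

section
/- Let (p_t) be an m-polynomial kernel semigroup on S and let A be a linear endomorphism of V such that ∫_S f(ξ) p_t(x, dξ) = (exp(tA) f)(x) for all t ≥ 0, f ∈ V, x ∈ S. Then for each fixed f ∈ V, the function Q(t, x) := (exp(tA) f)(x) is the unique function Q : ℝ × S → ℝ with the following properties: t ↦ Q(t, x) is real analytic for each x ∈ S; Q(t, ·) agrees on S with an element of V for each t ∈ ℝ; Q(0, ·) = f on S; and Q(t, x) = ∫_S Q(t−s, ξ) p_s(x, dξ) for all 0 ≤ s ≤ t and all x ∈ S. -/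
/-!
The series `∑ tʲ/j! · (Aʲ f)(x)` converges for `t ≥ 0` by the representation of the semigroup.
Convergence at `|t|` is absolute convergence at `t`, so for each `x ∈ S` it is a power series with
infinite radius of convergence: it defines an entire function of `t`
(`expSeries_summable`, `expSeries_analyticAt`).

For fixed `t` the partial sums are restrictions to `S` of elements of `V`. These restrictions form
a finite-dimensional, hence closed, subspace of `S → ℝ` with the topology of pointwise convergence,
so the limit is again a polynomial of degree at most `m`; this covers negative `t`, where no kernel
is available (`exists_poly_of_hasSum`).

The martingale property reduces to `∫∫ f dp_{t-s}(ξ) dp_s(x) = ∫ f dp_t(x)`, that is, to the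
Chapman–Kolmogorov equation tested against the integrable function `f` (`integral_bind_real`).

Uniqueness: the martingale property with `s = t ≥ 0` and the initial condition give
`Q(t, x) = ∫ f dp_t(x)`, so any two solutions agree for `t ≥ 0`. Both are analytic in `t`, so they
agree on all of `ℝ` by the identity theorem.
-/

open MeasureTheory MvPolynomial

/-- The properties characterizing `Q` in Corollary 2.4: real analyticity in time,
polynomiality of degree `≤ m` in space, the initial condition `Q(0,·) = f`, and the
martingale (kernel) property `Q(t, x) = ∫ Q(t−s, ξ) p_s(x, dξ)` for `0 ≤ s ≤ t`. -/
def IsMartingaleSolution (n m : ℕ) (P : MPolyKernelSemigroup n m)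
    (f : MvPolynomial (Fin n) ℝ) (Q : ℝ → (Fin n → ℝ) → ℝ) : Prop :=
  (∀ x ∈ P.S, ∀ t : ℝ, AnalyticAt ℝ (fun s => Q s x) t) ∧
  (∀ t : ℝ, ∃ q : MvPolynomial (Fin n) ℝ, q.totalDegree ≤ m ∧
    ∀ x ∈ P.S, Q t x = eval x q) ∧
  (∀ x ∈ P.S, Q 0 x = eval x f) ∧
  (∀ s t : ℝ, 0 ≤ s → s ≤ t → ∀ x ∈ P.S, Q t x = ∫ ξ, Q (t - s) ξ ∂(P.p s x))

/-- A nonzero `Measure.bind` can only come from an a.e.-measurable family, because the pushforward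
along a function that is not a.e.-measurable is the zero measure by convention. -/
lemma aemeasurable_of_bind_ne_zero {α β : Type*} [MeasurableSpace α] [MeasurableSpace β]
    {μ : Measure α} {κ : α → Measure β} (h : μ.bind κ ≠ 0) : AEMeasurable κ μ := by
  by_contra hκ
  apply h
  rw [Measure.bind, Measure.map_of_not_aemeasurable hκ, Measure.join_zero]

/-- Fubini's theorem for `Measure.bind` along a family that is only a.e.-measurable: the integral
is split into positive and negative parts, where it follows from the `lintegral` version. -/
lemma integral_bind_real {α β : Type*} [MeasurableSpace α] [MeasurableSpace β]
    {μ : Measure α} {κ : α → Measure β} (hκ : AEMeasurable κ μ) {f : β → ℝ} (hf : Measurable f)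
    (hint : Integrable f (μ.bind κ)) (hfib : ∀ᵐ a ∂μ, Integrable f (κ a)) :
    ∫ b, f b ∂(μ.bind κ) = ∫ a, ∫ b, f b ∂(κ a) ∂μ := by
  have key : ∀ g : β → ℝ, Measurable g → Integrable g (μ.bind κ) →
      Integrable (fun a => (∫⁻ b, ENNReal.ofReal (g b) ∂(κ a)).toReal) μ ∧
      ∫ a, (∫⁻ b, ENNReal.ofReal (g b) ∂(κ a)).toReal ∂μ =
        (∫⁻ b, ENNReal.ofReal (g b) ∂(μ.bind κ)).toReal := by
    intro g hg hgi
    have hlin := Measure.lintegral_bind hκ (f := fun b => ENNReal.ofReal (g b))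
      hg.ennreal_ofReal.aemeasurable
    have hfin : ∫⁻ b, ENNReal.ofReal (g b) ∂(μ.bind κ) ≠ ⊤ := hgi.lintegral_lt_top.ne
    have hmeas : AEMeasurable (fun a => ∫⁻ b, ENNReal.ofReal (g b) ∂(κ a)) μ :=
      (Measure.measurable_lintegral hg.ennreal_ofReal).comp_aemeasurable hκ
    rw [hlin] at hfin ⊢
    exact ⟨integrable_toReal_of_lintegral_ne_top hmeas hfin,
      integral_toReal hmeas (ae_lt_top' hmeas hfin)⟩
  obtain ⟨h1, h2⟩ := key f hf hint
  obtain ⟨h3, h4⟩ := key (fun b => - f b) hf.neg hint.neg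
  rw [integral_eq_lintegral_pos_part_sub_lintegral_neg_part hint, ← h2, ← h4,
    ← integral_sub h1 h3]
  refine integral_congr_ae ?_
  filter_upwards [hfib] with a ha
  rw [integral_eq_lintegral_pos_part_sub_lintegral_neg_part ha]

/-- Unconditional convergence in `ℝ` is absolute, so the sign of `t` does not matter. -/
lemma expSeries_summable {c : ℕ → ℝ}
    (hc : ∀ t : ℝ, 0 ≤ t → Summable fun j : ℕ => t ^ j / (j.factorial : ℝ) * c j) (t : ℝ) :
    Summable fun j : ℕ => t ^ j / (j.factorial : ℝ) * c j := by
  refine Summable.of_norm_bounded (hc |t| (abs_nonneg t)).norm fun j => ?_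
  simp

lemma expSeries_analyticAt {c : ℕ → ℝ}
    (hc : ∀ t : ℝ, 0 ≤ t → Summable fun j : ℕ => t ^ j / (j.factorial : ℝ) * c j) (t : ℝ) :
    AnalyticAt ℝ (fun s : ℝ => ∑' j : ℕ, s ^ j / (j.factorial : ℝ) * c j) t := by
  let p := FormalMultilinearSeries.ofScalars ℝ (fun j : ℕ => c j / (j.factorial : ℝ))
  have hr : p.radius = ⊤ := by
    refine p.radius_eq_top_of_summable_norm fun r => ?_
    refine (hc r r.2).norm.congr fun j => ?_
    simp only [p, FormalMultilinearSeries.ofScalars_norm, norm_mul, norm_div, norm_pow]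
    simp only [Real.norm_eq_abs, NNReal.abs_eq]
    ring
  have hball : HasFPowerSeriesOnBall
      (fun s : ℝ => ∑' j : ℕ, s ^ j / (j.factorial : ℝ) * c j) p 0 ⊤ := by
    refine ⟨hr.ge, by simp, fun {y} _ => ?_⟩
    rw [zero_add]
    refine (expSeries_summable hc y).hasSum.congr_fun fun j => ?_
    simp only [p, FormalMultilinearSeries.ofScalars_apply_eq, smul_eq_mul]
    ring
  exact hball.analyticAt_of_mem (by simp)

/-- A series of polynomials of degree at most `m` that converges pointwise on `S` converges to such
a polynomial: the restrictions to `S` form a finite-dimensional, hence closed, subspace of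
`S → ℝ`. -/
lemma exists_poly_of_hasSum {n m : ℕ} {S : Set (Fin n → ℝ)}
    (q : ℕ → restrictTotalDegree (Fin n) ℝ m) {F : (Fin n → ℝ) → ℝ}
    (h : ∀ x ∈ S, HasSum (fun j => eval x (q j : MvPolynomial (Fin n) ℝ)) (F x)) :
    ∃ g : MvPolynomial (Fin n) ℝ, g.totalDegree ≤ m ∧ ∀ x ∈ S, F x = eval x g := by
  let R : restrictTotalDegree (Fin n) ℝ m →ₗ[ℝ] (S → ℝ) :=
    LinearMap.pi fun x => (aeval (x : Fin n → ℝ)).toLinearMap ∘ₗ Submodule.subtype _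
  have hR : ∀ g (x : S), R g x = eval (x : Fin n → ℝ) (g : MvPolynomial (Fin n) ℝ) := by
    intro g x
    simp [R, aeval_eq_eval]
  have hsum : HasSum (fun j => R (q j)) (fun x : S => F x) := by
    rw [Pi.hasSum]
    intro x
    simpa only [hR] using h x x.2
  have hclosed : IsClosed (LinearMap.range R : Set (S → ℝ)) :=
    Submodule.closed_of_finiteDimensional _
  have hmem : (fun x : S => F x) ∈ (LinearMap.range R : Set (S → ℝ)) := by
    refine hclosed.mem_of_tendsto hsum (Filter.Eventually.of_forall fun s => ?_)
    exact Submodule.sum_mem _ fun j _ => LinearMap.mem_range_self R (q j)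
  obtain ⟨g, hg⟩ := hmem
  refine ⟨g, (mem_restrictTotalDegree _ _ _).1 g.2, fun x hx => ?_⟩
  rw [← hR g ⟨x, hx⟩, hg]

lemma MPolyKernelSemigroup.ae_mem {n m : ℕ} (P : MPolyKernelSemigroup n m) {t : ℝ} (ht : 0 ≤ t)
    {x : Fin n → ℝ} (hx : x ∈ P.S) : ∀ᵐ ξ ∂(P.p t x), ξ ∈ P.S :=
  mem_ae_iff.2 (P.supported t ht x hx)

/-- The Chapman–Kolmogorov equation tested against a polynomial of degree at most `m`. -/
lemma MPolyKernelSemigroup.integral_chapman {n m : ℕ} (P : MPolyKernelSemigroup n m)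
    {s u : ℝ} (hs : 0 ≤ s) (hu : 0 ≤ u) {x : Fin n → ℝ} (hx : x ∈ P.S)
    {f : MvPolynomial (Fin n) ℝ} (hf : f.totalDegree ≤ m) :
    ∫ ξ, eval ξ f ∂(P.p (s + u) x) = ∫ ξ, ∫ η, eval η f ∂(P.p u ξ) ∂(P.p s x) := by
  have hsu : 0 ≤ s + u := add_nonneg hs hu
  have hck := P.chapman u hu s hs x hx
  have := P.isProb (s + u) hsu x hx
  have hne : (P.p s x).bind (P.p u) ≠ 0 := hck ▸ IsProbabilityMeasure.ne_zero (P.p (s + u) x)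
  have hint := P.integrable (s + u) hsu x hx f hf
  rw [hck] at hint ⊢
  refine integral_bind_real (aemeasurable_of_bind_ne_zero hne)
    (MvPolynomial.continuous_eval f).measurable hint ?_
  filter_upwards [P.ae_mem hs hx] with ξ hξ
  exact P.integrable u hu ξ hξ f hf

/-- Corollary 2.4: for an `m`-polynomial kernel semigroup represented by `exp(tA)` and
fixed `f ∈ V`, the function `Q(t, x) = (exp(tA) f)(x)` is the unique function which is
real analytic in time, polynomial of degree `≤ m` in space, has initial value `f`, and
satisfies the martingale property with respect to the kernels. -/
theorem mPolyKernelSemigroup_unique_martingale_solution (n m : ℕ)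
    (P : MPolyKernelSemigroup n m)
    (A : Module.End ℝ (restrictTotalDegree (Fin n) ℝ m))
    (hA : ∀ t : ℝ, 0 ≤ t → ∀ f : restrictTotalDegree (Fin n) ℝ m, ∀ x ∈ P.S,
      HasSum
        (fun j : ℕ => t ^ j / (j.factorial : ℝ) *
          eval x (((A ^ j) f : restrictTotalDegree (Fin n) ℝ m) : MvPolynomial (Fin n) ℝ))
        (∫ ξ, eval ξ (f : MvPolynomial (Fin n) ℝ) ∂(P.p t x)))
    (f : restrictTotalDegree (Fin n) ℝ m) :
    IsMartingaleSolution n m P (f : MvPolynomial (Fin n) ℝ)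
      (fun t x => ∑' j : ℕ, t ^ j / (j.factorial : ℝ) *
        eval x (((A ^ j) f : restrictTotalDegree (Fin n) ℝ m) : MvPolynomial (Fin n) ℝ)) ∧
    ∀ Q : ℝ → (Fin n → ℝ) → ℝ,
      IsMartingaleSolution n m P (f : MvPolynomial (Fin n) ℝ) Q →
      ∀ t : ℝ, ∀ x ∈ P.S,
        Q t x = ∑' j : ℕ, t ^ j / (j.factorial : ℝ) *
          eval x (((A ^ j) f : restrictTotalDegree (Fin n) ℝ m) : MvPolynomial (Fin n) ℝ) := by
  have hc : ∀ x ∈ P.S, ∀ t : ℝ, 0 ≤ t → Summable fun j : ℕ => t ^ j / (j.factorial : ℝ) *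
      eval x (((A ^ j) f : restrictTotalDegree (Fin n) ℝ m) : MvPolynomial (Fin n) ℝ) :=
    fun x hx t ht => (hA t ht f x hx).summable
  have hf : (f : MvPolynomial (Fin n) ℝ).totalDegree ≤ m := (mem_restrictTotalDegree _ _ _).1 f.2
  refine ⟨⟨fun x hx t => expSeries_analyticAt (hc x hx) t, fun t => ?_, fun x hx => ?_,
    fun s t hs hst x hx => ?_⟩, fun Q hQ t x hx => ?_⟩
  · refine exists_poly_of_hasSum (fun j : ℕ => (t ^ j / (j.factorial : ℝ)) • (A ^ j) f)
      fun x hx => ?_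
    simpa using (expSeries_summable (hc x hx) t).hasSum
  · simp only
    rw [(hA 0 le_rfl f x hx).tsum_eq, P.dirac_zero x hx, integral_dirac]
  · have hu : 0 ≤ t - s := sub_nonneg.2 hst
    simp only
    rw [(hA t (hs.trans hst) f x hx).tsum_eq]
    have hck := P.integral_chapman hs hu hx hf
    rw [add_sub_cancel] at hck
    rw [hck]
    refine integral_congr_ae ?_
    filter_upwards [P.ae_mem hs hx] with ξ hξ
    exact (hA (t - s) hu f ξ hξ).tsum_eq.symm
  · obtain ⟨hQan, -, hQ0, hQmart⟩ := hQ
    have hpos : ∀ r : ℝ, 0 ≤ r → Q r x = ∑' j : ℕ, r ^ j / (j.factorial : ℝ) *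
        eval x (((A ^ j) f : restrictTotalDegree (Fin n) ℝ m) : MvPolynomial (Fin n) ℝ) := by
      intro r hr
      rw [(hA r hr f x hx).tsum_eq, hQmart r r hr le_rfl x hx, sub_self]
      refine integral_congr_ae ?_
      filter_upwards [P.ae_mem hr hx] with ξ hξ
      exact hQ0 ξ hξ
    -- The two analytic functions of time agree near `1`, hence everywhere.
    have heq := AnalyticOnNhd.eq_of_eventuallyEq (𝕜 := ℝ) (z₀ := (1 : ℝ))
      (fun r _ => hQan x hx r) (fun r _ => expSeries_analyticAt (hc x hx) r)
      ((lt_mem_nhds (zero_lt_one (α := ℝ))).mono fun r hr => hpos r hr.le)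
    exact congrFun heq t
end

section
/- Let (p_t) be an m-polynomial kernel semigroup on S and let A be a linear endomorphism of V such that ∫_S f(ξ) p_t(x, dξ) = (exp(tA) f)(x) for all t ≥ 0, f ∈ V, x ∈ S. Fix f ∈ V and define R(s, x) := (exp(−sA) f)(x) for s ≥ 0, x ∈ S. Then for all 0 ≤ s ≤ t and all x ∈ S: ∫_S R(t, ξ) p_{t−s}(x, dξ) = R(s, x); that is, R is time-space harmonic for the semigroup. -/
/-!
The space `V` of polynomials of degree at most `m` is finite-dimensional, so an endomorphism `A`
of `V` has an exponential `exp (tA)`, obtained from the matrix exponential through a basis of `V`.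
It satisfies `exp ((s + t)A) = exp (sA) exp (tA)`, and `∑ tʲ/j! ℓ(Aʲ)` converges to
`ℓ (exp (tA))` for every linear functional `ℓ` on `End V`, since such functionals are continuous.

Taking for `ℓ` the functionals `B ↦ (B f)(x)`, the function `R t` is the polynomial function of
`g = exp (-tA) f ∈ V`. The hypothesis on the semigroup therefore gives
`∫ R t dp_{t-s}(x, ·) = (exp ((t - s)A) g)(x) = (exp (-sA) f)(x) = R s x`.
-/

open MeasureTheory MvPolynomial

/-- The one-parameter group `t ↦ exp (tA)` of an endomorphism of a finite-dimensional space,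
characterised by the group law and by its exponential series tested against linear functionals, so
that no norm on the space has to be chosen. -/
theorem exists_exp_group {V : Type*} [AddCommGroup V] [Module ℝ V] [Module.Finite ℝ V]
    (A : Module.End ℝ V) :
    ∃ E : ℝ → Module.End ℝ V, (∀ s t, E (s + t) = E s * E t) ∧
      ∀ (t : ℝ) (ℓ : Module.End ℝ V →ₗ[ℝ] ℝ),
        HasSum (fun j : ℕ => t ^ j / (j.factorial : ℝ) * ℓ (A ^ j)) (ℓ (E t)) := by
  let Φ := LinearMap.toMatrixAlgEquiv (Module.finBasis ℝ V)
  refine ⟨fun t => Φ.symm (NormedSpace.exp (t • Φ A)), fun s t => ?_, fun t ℓ => ?_⟩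
  · beta_reduce
    rw [add_smul, Matrix.exp_add_of_commute _ _
      (((Commute.refl (Φ A)).smul_left s).smul_right t), map_mul]
  · open scoped Matrix.Norms.Operator in
    have h := NormedSpace.exp_series_hasSum_exp' (𝕂 := ℝ) (t • Φ A)
    let L := ℓ ∘ₗ Φ.symm.toLinearMap
    have h' := h.map L L.continuous_of_finiteDimensional
    change HasSum _ (L (NormedSpace.exp (t • Φ A)))
    convert h' using 1
    · funext j
      simp [L, smul_pow, smul_smul, div_eq_inv_mul]
    -- The two exponentials use different, definitionally equal, instances on matrices.
    · rfl

/-- Corollaries 2.4/2.6 in kernel form: the function `R(s, x) = (exp(−sA) f)(x)` is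
time-space harmonic for the semigroup, i.e. `∫ R(t, ξ) p_{t−s}(x, dξ) = R(s, x)` for
all `0 ≤ s ≤ t` and `x ∈ S`. -/
theorem mPolyKernelSemigroup_time_space_harmonic (n m : ℕ)
    (P : MPolyKernelSemigroup n m)
    (A : Module.End ℝ (restrictTotalDegree (Fin n) ℝ m))
    (hA : ∀ t : ℝ, 0 ≤ t → ∀ f : restrictTotalDegree (Fin n) ℝ m, ∀ x ∈ P.S,
      HasSum
        (fun j : ℕ => t ^ j / (j.factorial : ℝ) *
          eval x (((A ^ j) f : restrictTotalDegree (Fin n) ℝ m) : MvPolynomial (Fin n) ℝ))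
        (∫ ξ, eval ξ (f : MvPolynomial (Fin n) ℝ) ∂(P.p t x)))
    (f : restrictTotalDegree (Fin n) ℝ m)
    (R : ℝ → (Fin n → ℝ) → ℝ)
    (hR : ∀ s : ℝ, ∀ x : Fin n → ℝ,
      R s x = ∑' j : ℕ, (-s) ^ j / (j.factorial : ℝ) *
        eval x (((A ^ j) f : restrictTotalDegree (Fin n) ℝ m) : MvPolynomial (Fin n) ℝ)) :
    ∀ s t : ℝ, 0 ≤ s → s ≤ t → ∀ x ∈ P.S,
      (∫ ξ, R t ξ ∂(P.p (t - s) x)) = R s x := by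
  obtain ⟨E, hE, hsum⟩ := exists_exp_group A
  -- The linear functional `B ↦ (B h)(x)` on endomorphisms.
  let ev : (Fin n → ℝ) → restrictTotalDegree (Fin n) ℝ m →
      Module.End ℝ (restrictTotalDegree (Fin n) ℝ m) →ₗ[ℝ] ℝ := fun x h =>
    (aeval x).toLinearMap ∘ₗ (restrictTotalDegree (Fin n) ℝ m).subtype ∘ₗ LinearMap.applyₗ h
  have hev : ∀ x h B, ev x h B = eval x ((B h : restrictTotalDegree (Fin n) ℝ m) :
      MvPolynomial (Fin n) ℝ) := fun x h B => by
    simp [ev, aeval_eq_eval]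
  have hRE : ∀ s x, R s x = eval x ((E (-s) f : restrictTotalDegree (Fin n) ℝ m) :
      MvPolynomial (Fin n) ℝ) := fun s x => by
    rw [hR]
    simpa only [hev] using (hsum (-s) (ev x f)).tsum_eq
  intro s t _ hst x hx
  have h₁ := hA (t - s) (sub_nonneg.2 hst) (E (-t) f) x hx
  have h₂ := hsum (t - s) (ev x (E (-t) f))
  simp only [hev] at h₂
  simp only [hRE]
  rw [h₁.unique h₂, ← Module.End.mul_apply, ← hE]
  congr 4
  ring
end

section
/- Let m ≥ 2 and let μ be a Lévy measure with finite m-th moment on ℝ^n. Then for every real polynomial f in n variables of total degree ≤ m and every x ∈ ℝ^n, the function ξ ↦ f(x+ξ) − f(x) − Σ_{k=1}^n ξ_k (∂_k f)(x) is μ-integrable, and there exists a polynomial g of total degree ≤ m − 2 such that g(x) = ∫ ( f(x+ξ) − f(x) − Σ_{k=1}^n ξ_k (∂_k f)(x) ) μ(dξ) for all x ∈ ℝ^n. -/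
/-!
The jump integrand is a linear combination of products `x ^ a * ξ ^ b` with `2 ≤ |b|` and
`|a| + |b| ≤ m`: Taylor expansion at `x` preserves the total degree, and subtracting `f(x)` and the
gradient term removes exactly the parts of degree `0` and `1` in `ξ`. This is
`jumpRemainder_mem`; the span of such products is `jumpSpan n m`, and the case of monomials goes by
induction on the degree, through the product rule `jumpRemainder_X_mul`.

For `2 ≤ |b| ≤ m` the monomial `ξ ^ b` is bounded by `‖ξ‖ ^ 2` for `‖ξ‖ ≤ 1` and by `‖ξ‖ ^ m` for
`‖ξ‖ > 1`, so it is `μ`-integrable (`integrable_monomial`). Integrating `x ^ a * ξ ^ b` against `μ`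
then leaves a multiple of `x ^ a`, where `|a| ≤ m - |b| ≤ m - 2`.
-/

open MeasureTheory MvPolynomial

/-- The functions of `(x, ξ)` spanned by the products `x ^ a * ξ ^ b` of joint degree at most `d`
and of degree at least two in `ξ`. -/
def jumpSpan (n d : ℕ) : Submodule ℝ ((Fin n → ℝ) → (Fin n → ℝ) → ℝ) :=
  Submodule.span ℝ {F | ∃ a b : Fin n →₀ ℕ, 2 ≤ b.degree ∧ a.degree + b.degree ≤ d ∧
    F = fun x ξ => eval x (monomial a (1 : ℝ)) * eval ξ (monomial b (1 : ℝ))}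

/-- The first-order Taylor remainder `f(x + ξ) - f(x) - ⟨ξ, ∇f(x)⟩`, linear in `f`. -/
noncomputable def jumpRemainder (n : ℕ) :
    MvPolynomial (Fin n) ℝ →ₗ[ℝ] ((Fin n → ℝ) → (Fin n → ℝ) → ℝ) where
  toFun f := fun x ξ => eval (x + ξ) f - eval x f - ∑ k, ξ k * eval x (pderiv k f)
  map_add' f g := by
    funext x ξ
    simp only [map_add, mul_add, Finset.sum_add_distrib, Pi.add_apply]
    ring
  map_smul' c f := by
    funext x ξ
    simp only [Derivation.map_smul, smul_eval, RingHom.id_apply, Pi.smul_apply, smul_eq_mul,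
      mul_sub, Finset.mul_sum]
    congr 1
    exact Finset.sum_congr rfl fun k _ => by ring

lemma jumpRemainder_apply {n : ℕ} (f : MvPolynomial (Fin n) ℝ) (x ξ : Fin n → ℝ) :
    jumpRemainder n f x ξ =
      eval (x + ξ) f - eval x f - ∑ k, ξ k * eval x (pderiv k f) := rfl

lemma jumpSpan_mono {n d e : ℕ} (h : d ≤ e) : jumpSpan n d ≤ jumpSpan n e := by
  refine Submodule.span_mono ?_
  rintro F ⟨a, b, hb, hab, rfl⟩
  exact ⟨a, b, hb, hab.trans h, rfl⟩

lemma eval_monomial_add_single {n : ℕ} (a : Fin n →₀ ℕ) (i : Fin n) (x : Fin n → ℝ) :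
    eval x (monomial (a + Finsupp.single i 1) (1 : ℝ)) = x i * eval x (monomial a (1 : ℝ)) := by
  rw [monomial_add_single, pow_one, map_mul, eval_X, mul_comm]

lemma mul_fst_mem {n d : ℕ} (i : Fin n) {F : (Fin n → ℝ) → (Fin n → ℝ) → ℝ}
    (hF : F ∈ jumpSpan n d) : (fun x ξ => x i * F x ξ) ∈ jumpSpan n (d + 1) := by
  unfold jumpSpan at hF
  induction hF using Submodule.span_induction with
  | mem F h =>
    obtain ⟨a, b, hb, hab, rfl⟩ := h
    refine Submodule.subset_span ⟨a + Finsupp.single i 1, b, hb, ?_, ?_⟩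
    · rw [map_add, Finsupp.degree_single]; omega
    · funext x ξ; rw [eval_monomial_add_single]; ring
  | zero =>
    simp only [Pi.zero_apply, mul_zero]
    exact (jumpSpan n (d + 1)).zero_mem
  | add F G _ _ hF hG =>
    convert (jumpSpan n (d + 1)).add_mem hF hG using 1
    funext x ξ; simp only [Pi.add_apply]; ring
  | smul c F _ hF =>
    convert (jumpSpan n (d + 1)).smul_mem c hF using 1
    funext x ξ; simp only [Pi.smul_apply, smul_eq_mul]; ring

lemma mul_snd_mem {n d : ℕ} (i : Fin n) {F : (Fin n → ℝ) → (Fin n → ℝ) → ℝ}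
    (hF : F ∈ jumpSpan n d) : (fun x ξ => ξ i * F x ξ) ∈ jumpSpan n (d + 1) := by
  unfold jumpSpan at hF
  induction hF using Submodule.span_induction with
  | mem F h =>
    obtain ⟨a, b, hb, hab, rfl⟩ := h
    refine Submodule.subset_span ⟨a, b + Finsupp.single i 1, ?_, ?_, ?_⟩
    · rw [map_add]; omega
    · rw [map_add, Finsupp.degree_single]; omega
    · funext x ξ; rw [eval_monomial_add_single]; ring
  | zero =>
    simp only [Pi.zero_apply, mul_zero]
    exact (jumpSpan n (d + 1)).zero_mem
  | add F G _ _ hF hG =>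
    convert (jumpSpan n (d + 1)).add_mem hF hG using 1
    funext x ξ; simp only [Pi.add_apply]; ring
  | smul c F _ hF =>
    convert (jumpSpan n (d + 1)).smul_mem c hF using 1
    funext x ξ; simp only [Pi.smul_apply, smul_eq_mul]; ring

/-- The product rule for the Taylor remainder. -/
lemma jumpRemainder_X_mul {n : ℕ} (i : Fin n) (f : MvPolynomial (Fin n) ℝ) :
    jumpRemainder n (X i * f) =
      (fun x ξ => x i * jumpRemainder n f x ξ) + (fun x ξ => ξ i * jumpRemainder n f x ξ) +
        ∑ k, fun x ξ => ξ i * ξ k * eval x (pderiv k f) := by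
  funext x ξ
  have h : ∑ k, ξ k * eval x (pderiv k (X i * f)) =
      ξ i * eval x f + x i * ∑ k, ξ k * eval x (pderiv k f) := by
    rw [Finset.mul_sum]
    simp only [pderiv_mul, pderiv_X, map_add, map_mul, eval_X, mul_add, Finset.sum_add_distrib]
    congr 1
    · rw [Finset.sum_eq_single i]
      · simp
      · intro k _ hk
        simp [Pi.single_eq_of_ne hk.symm]
      · simp
    · exact Finset.sum_congr rfl fun k _ => by ring
  have h' : ∑ k, ξ i * ξ k * eval x (pderiv k f) = ξ i * ∑ k, ξ k * eval x (pderiv k f) := by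
    rw [Finset.mul_sum]
    exact Finset.sum_congr rfl fun k _ => by ring
  simp only [Pi.add_apply, Finset.sum_apply, jumpRemainder_apply]
  rw [h, h']
  simp only [map_mul, eval_X, Pi.add_apply]
  ring

/-- The correction terms in the product rule: a partial derivative lowers the degree by one, and the
factors `ξ i` and `ξ k` raise the joint degree by two. -/
lemma mul_mul_pderiv_mem {n : ℕ} (i k : Fin n) (s : Fin n →₀ ℕ) :
    (fun x ξ => ξ i * ξ k * eval x (pderiv k (monomial s (1 : ℝ)))) ∈
      jumpSpan n (s.degree + 1) := by
  by_cases hs : s k = 0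
  · simp only [pderiv_monomial, hs, Nat.cast_zero, mul_zero, map_zero]
    exact (jumpSpan n (s.degree + 1)).zero_mem
  obtain ⟨t, rfl⟩ : ∃ t, s = t + Finsupp.single k 1 :=
    ⟨s - Finsupp.single k 1, (tsub_add_cancel_of_le (by
      simpa using Nat.one_le_iff_ne_zero.mpr hs)).symm⟩
  have hgen : (fun x ξ => eval x (monomial t (1 : ℝ)) *
      eval ξ (monomial (Finsupp.single k 1 + Finsupp.single i 1) (1 : ℝ))) ∈
      jumpSpan n ((t + Finsupp.single k 1).degree + 1) := by
    refine Submodule.subset_span ⟨t, _, ?_, ?_, rfl⟩ <;>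
      simp only [map_add, Finsupp.degree_single] <;> omega
  convert (jumpSpan n _).smul_mem (((t + Finsupp.single k 1 : Fin n →₀ ℕ) k : ℕ) : ℝ) hgen using 1
  funext x ξ
  have hsingle : eval ξ (monomial (Finsupp.single k 1) (1 : ℝ)) = ξ k := by
    simpa using eval_monomial_add_single 0 k ξ
  rw [pderiv_monomial, add_tsub_cancel_right, Pi.smul_apply, Pi.smul_apply,
    eval_monomial_add_single, hsingle, eval_monomial, eval_monomial, smul_eq_mul]
  ring

lemma jumpRemainder_monomial_mem {n : ℕ} (d : ℕ) (s : Fin n →₀ ℕ) (hs : s.degree = d) :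
    jumpRemainder n (monomial s 1) ∈ jumpSpan n d := by
  induction d generalizing s with
  | zero =>
    obtain rfl := (Finsupp.degree_eq_zero_iff s).mp hs
    convert (jumpSpan n 0).zero_mem using 1
    funext x ξ
    simp [jumpRemainder_apply]
  | succ d ih =>
    obtain ⟨i, hi⟩ : ∃ i, s i ≠ 0 := by
      by_contra! h
      have : s = 0 := Finsupp.ext h
      simp [this] at hs
    obtain ⟨t, rfl⟩ : ∃ t, s = t + Finsupp.single i 1 :=
      ⟨s - Finsupp.single i 1, (tsub_add_cancel_of_le (by
        simpa using Nat.one_le_iff_ne_zero.mpr hi)).symm⟩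
    have ht : t.degree = d := by
      rw [map_add, Finsupp.degree_single] at hs; omega
    rw [monomial_add_single, pow_one, mul_comm, jumpRemainder_X_mul]
    refine add_mem (add_mem (mul_fst_mem i (ih t ht)) (mul_snd_mem i (ih t ht)))
      (sum_mem fun k _ => ?_)
    simpa only [ht] using mul_mul_pderiv_mem i k t

/-- The remainder of a polynomial of degree at most `m` has joint degree at most `m`, and only
terms of degree at least two in `ξ`. -/
lemma jumpRemainder_mem {n m : ℕ} (f : MvPolynomial (Fin n) ℝ) (hf : f.totalDegree ≤ m) :
    jumpRemainder n f ∈ jumpSpan n m := by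
  rw [f.as_sum, map_sum]
  refine sum_mem fun s hs => ?_
  have h : monomial s (coeff s f) = coeff s f • monomial s (1 : ℝ) := by
    rw [smul_monomial, smul_eq_mul, mul_one]
  rw [h, map_smul]
  refine Submodule.smul_mem _ _ (jumpSpan_mono ?_ (jumpRemainder_monomial_mem _ s rfl))
  refine le_trans ?_ hf
  simpa only [Finsupp.degree_apply, Finsupp.sum] using le_totalDegree hs

lemma abs_eval_monomial_le {n : ℕ} (b : Fin n →₀ ℕ) (ξ : Fin n → ℝ) :
    |eval ξ (monomial b (1 : ℝ))| ≤ ‖ξ‖ ^ b.degree := by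
  rw [eval_monomial, one_mul, Finsupp.prod, Finset.abs_prod, Finsupp.degree_apply,
    ← Finset.prod_pow_eq_pow_sum]
  refine Finset.prod_le_prod (fun _ _ => abs_nonneg _) fun i _ => ?_
  rw [abs_pow]
  exact pow_le_pow_left₀ (abs_nonneg _) (norm_le_pi_norm ξ i) _

lemma integrable_monomial {n m : ℕ} {μ : Measure (Fin n → ℝ)}
    (hsmall : (∫⁻ ξ, ENNReal.ofReal (min (‖ξ‖ ^ 2) 1) ∂μ) < ⊤)
    (hbig : (∫⁻ ξ in {ξ : Fin n → ℝ | 1 < ‖ξ‖}, ENNReal.ofReal (‖ξ‖ ^ m) ∂μ) < ⊤)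
    (b : Fin n →₀ ℕ) (hb : 2 ≤ b.degree) (hbm : b.degree ≤ m) :
    Integrable (fun ξ => eval ξ (monomial b (1 : ℝ))) μ := by
  have hS : MeasurableSet {ξ : Fin n → ℝ | 1 < ‖ξ‖} :=
    measurableSet_lt measurable_const measurable_norm
  have h1 : Integrable (fun ξ : Fin n → ℝ => min (‖ξ‖ ^ 2) 1) μ :=
    (lintegral_ofReal_ne_top_iff_integrable (by fun_prop)
      (Filter.Eventually.of_forall fun ξ => by positivity)).mp hsmall.ne
  have h2 : IntegrableOn (fun ξ : Fin n → ℝ => ‖ξ‖ ^ m) {ξ | 1 < ‖ξ‖} μ :=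
    (lintegral_ofReal_ne_top_iff_integrable (by fun_prop)
      (Filter.Eventually.of_forall fun ξ => by positivity)).mp hbig.ne
  refine (h1.add (h2.integrable_indicator hS)).mono'
    (MvPolynomial.continuous_eval _).aestronglyMeasurable
    (Filter.Eventually.of_forall fun ξ => ?_)
  rw [Real.norm_eq_abs, Pi.add_apply]
  refine (abs_eval_monomial_le b ξ).trans ?_
  by_cases h : 1 < ‖ξ‖
  · rw [Set.indicator_of_mem (show ξ ∈ {ξ : Fin n → ℝ | 1 < ‖ξ‖} from h)]
    have h3 : ‖ξ‖ ^ b.degree ≤ ‖ξ‖ ^ m := pow_le_pow_right₀ h.le hbm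
    have h4 : 0 ≤ min (‖ξ‖ ^ 2) 1 := by positivity
    linarith
  · rw [Set.indicator_of_notMem (show ξ ∉ {ξ : Fin n → ℝ | 1 < ‖ξ‖} from h), add_zero]
    have h3 : ‖ξ‖ ≤ 1 := not_lt.mp h
    exact le_min (pow_le_pow_of_le_one (norm_nonneg _) h3 hb) (pow_le_one₀ (norm_nonneg _) h3)

/-- Integrating out `ξ` maps `jumpSpan n m` into the polynomials of degree at most `m - 2`. -/
lemma integral_of_mem_jumpSpan {n m : ℕ} {μ : Measure (Fin n → ℝ)}
    (hsmall : (∫⁻ ξ, ENNReal.ofReal (min (‖ξ‖ ^ 2) 1) ∂μ) < ⊤)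
    (hbig : (∫⁻ ξ in {ξ : Fin n → ℝ | 1 < ‖ξ‖}, ENNReal.ofReal (‖ξ‖ ^ m) ∂μ) < ⊤)
    {F : (Fin n → ℝ) → (Fin n → ℝ) → ℝ} (hF : F ∈ jumpSpan n m) :
    (∀ x, Integrable (F x) μ) ∧
      ∃ g : MvPolynomial (Fin n) ℝ, g.totalDegree ≤ m - 2 ∧ ∀ x, eval x g = ∫ ξ, F x ξ ∂μ := by
  unfold jumpSpan at hF
  induction hF using Submodule.span_induction with
  | mem F h =>
    obtain ⟨a, b, hb, hab, rfl⟩ := h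
    refine ⟨fun x => (integrable_monomial hsmall hbig b hb (by omega)).const_mul _,
      monomial a (∫ ξ, eval ξ (monomial b (1 : ℝ)) ∂μ), ?_, fun x => ?_⟩
    · have h : a.degree ≤ m - 2 := by omega
      refine (totalDegree_monomial_le _ _).trans ?_
      simpa only [Finsupp.degree_apply, Finsupp.sum, id] using h
    · rw [integral_const_mul, eval_monomial, eval_monomial, one_mul, mul_comm]
  | zero => exact ⟨fun x => integrable_zero _ _ _, 0, by simp, by simp⟩
  | add F G _ _ hF hG =>
    obtain ⟨hF, p, hp, hpF⟩ := hF
    obtain ⟨hG, q, hq, hqG⟩ := hG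
    refine ⟨fun x => (hF x).add (hG x), p + q,
      (totalDegree_add p q).trans (max_le hp hq), fun x => ?_⟩
    rw [map_add, hpF, hqG]
    exact (integral_add (hF x) (hG x)).symm
  | smul c F _ hF =>
    obtain ⟨hF, p, hp, hpF⟩ := hF
    refine ⟨fun x => (hF x).smul c, c • p, (totalDegree_smul_le c p).trans hp, fun x => ?_⟩
    rw [smul_eval, hpF]
    exact (integral_const_mul c _).symm

/-- The integro-operator core of the proof of Theorem 3.5 under Condition A: for a Lévy
measure `μ` on `ℝ^n` with finite `m`-th moment and a polynomial `f` of total degree `≤ m`,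
the jump integrand `ξ ↦ f(x+ξ) − f(x) − ⟨ξ, ∇f(x)⟩` is `μ`-integrable and its integral
is a polynomial in `x` of total degree `≤ m − 2`. -/
theorem levy_jump_operator_polynomial (n m : ℕ) (hm : 2 ≤ m)
    (μ : Measure (Fin n → ℝ)) [SigmaFinite μ]
    (h0 : μ {0} = 0)
    (hsmall : (∫⁻ ξ, ENNReal.ofReal (min (‖ξ‖ ^ 2) 1) ∂μ) < ⊤)
    (hbig : (∫⁻ ξ in {ξ : Fin n → ℝ | 1 < ‖ξ‖}, ENNReal.ofReal (‖ξ‖ ^ m) ∂μ) < ⊤)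
    (f : MvPolynomial (Fin n) ℝ) (hf : f.totalDegree ≤ m) :
    (∀ x : Fin n → ℝ,
      Integrable (fun ξ =>
        eval (x + ξ) f - eval x f - ∑ k, ξ k * eval x (pderiv k f)) μ) ∧
    (∃ g : MvPolynomial (Fin n) ℝ, g.totalDegree ≤ m - 2 ∧
      ∀ x : Fin n → ℝ,
        eval x g =
          ∫ ξ, (eval (x + ξ) f - eval x f - ∑ k, ξ k * eval x (pderiv k f)) ∂μ) := by
  exact integral_of_mem_jumpSpan hsmall hbig (jumpRemainder_mem f hf)
end

section
/- Let m ≥ 2 and n ≥ 1. Let a_{kl} (k, l = 1, …, n) be real polynomials in n variables of total degree ≤ 2, let b_k (k = 1, …, n) be real polynomials of total degree ≤ 1, let I ⊆ {1, …, n} and J ⊆ {1, …, n}², and let μ_{00}, and μ_{i0} for i ∈ I, and μ_{ij} for (i, j) ∈ J, each be a Lévy measure with finite m-th moment on ℝ^n. Then for every real polynomial f of total degree ≤ m, the function A♯f(x) := (1/2) Σ_{k,l} a_{kl}(x) (∂_k ∂_l f)(x) + Σ_k b_k(x) (∂_k f)(x) + ∫ D_f(x, ξ) μ_{00}(dξ)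 + Σ_{i ∈ I} x_i ∫ D_f(x, ξ) μ_{i0}(dξ) + Σ_{(i,j) ∈ J} x_i x_j ∫ D_f(x, ξ) μ_{ij}(dξ), where D_f(x, ξ) := f(x+ξ) − f(x) − Σ_{k=1}^n ξ_k (∂_k f)(x), is well defined (all integrals converge absolutely) and agrees with a polynomial of total degree ≤ m. -/
/-!
The jump integrand `D_f(x, ξ)` is the second-order Taylor remainder of a polynomial, so it is a
linear combination of terms `ξ^α q(x)` with `2 ≤ |α|` and `|α| + deg q ≤ deg f`
(`jumpIntegrand_mem`). This follows by induction on the degree of a monomial from the product rule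
`D_{p X_i}(x, ξ) = (x_i + ξ_i) D_p(x, ξ) + ∑_k ξ_i ξ_k ∂_k p(x)` (`jumpIntegrand_mul_X`).

For `2 ≤ |α| ≤ m` the function `ξ^α` is dominated by `min (‖ξ‖²) 1 + ‖ξ‖^m 1_{‖ξ‖ > 1}`, hence
is integrable against a Lévy measure with finite `m`-th moment. Integrating in `ξ` therefore turns
`D_f` into a polynomial in `x` of degree at most `m - 2` (`exists_polynomial_integral`). Multiplying
it by `1`, `x_i` or `x_i x_j` keeps the degree at most `m`, and the diffusion and drift terms have
degree at most `m` because each derivative lowers the degree by one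
(`totalDegree_pderiv_le_sub_one`).
-/

open MeasureTheory MvPolynomial

/-- A Lévy measure on `ℝ^n` with finite `m`-th moment. -/
def IsLevyMeasureWithMoment (n m : ℕ) (μ : Measure (Fin n → ℝ)) : Prop :=
  SigmaFinite μ ∧ μ {0} = 0 ∧
    (∫⁻ ξ, ENNReal.ofReal (min (‖ξ‖ ^ 2) 1) ∂μ) < ⊤ ∧
    (∫⁻ ξ in {ξ : Fin n → ℝ | 1 < ‖ξ‖}, ENNReal.ofReal (‖ξ‖ ^ m) ∂μ) < ⊤

/-- The jump-operator integrand `D_f(x, ξ) = f(x+ξ) − f(x) − ⟨ξ, ∇f(x)⟩`. -/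
noncomputable def jumpIntegrand {n : ℕ} (f : MvPolynomial (Fin n) ℝ)
    (x ξ : Fin n → ℝ) : ℝ :=
  eval (x + ξ) f - eval x f - ∑ k, ξ k * eval x (pderiv k f)

theorem totalDegree_pderiv_le_sub_one {n : ℕ} (i : Fin n) (p : MvPolynomial (Fin n) ℝ) :
    (pderiv i p).totalDegree ≤ p.totalDegree - 1 := by
  refine Finset.sup_le fun t ht => ?_
  rw [mem_support_iff, coeff_pderiv] at ht
  have h := le_totalDegree (mem_support_iff.mpr (left_ne_zero_of_mul ht))
  rw [Finsupp.sum_add_index' (fun _ => rfl) (fun _ _ _ => rfl),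
    Finsupp.sum_single_index rfl] at h
  exact Nat.le_sub_one_of_lt h

theorem jumpIntegrand_add {n : ℕ} (p q : MvPolynomial (Fin n) ℝ) :
    jumpIntegrand (p + q) = jumpIntegrand p + jumpIntegrand q := by
  ext x ξ
  simp only [jumpIntegrand, map_add, Pi.add_apply, mul_add, Finset.sum_add_distrib]
  ring

/-- The product rule for the Taylor remainder, which drives the induction on the degree. -/
theorem jumpIntegrand_mul_X {n : ℕ} (p : MvPolynomial (Fin n) ℝ) (i : Fin n)
    (x ξ : Fin n → ℝ) :
    jumpIntegrand (p * X i) x ξ =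
      x i * jumpIntegrand p x ξ + ξ i * jumpIntegrand p x ξ +
        ∑ k, ξ i * (ξ k * eval x (pderiv k p)) := by
  classical
  have h : ∑ k, ξ k * eval x (pderiv k (p * X i)) =
      x i * ∑ k, ξ k * eval x (pderiv k p) + ξ i * eval x p := by
    simp only [pderiv_mul, pderiv_X, map_add, map_mul, eval_X, mul_add, Finset.sum_add_distrib]
    congr 1
    · rw [Finset.mul_sum]
      exact Finset.sum_congr rfl fun k _ => by ring
    · rw [Finset.sum_eq_single i]
      · simp
      · intro k _ hk
        simp [hk.symm]
      · simp
  rw [← Finset.mul_sum]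
  simp only [jumpIntegrand, h, map_mul, eval_X, Pi.add_apply]
  ring

/-- The span of the functions `(x, ξ) ↦ ξ^α q(x)` with `2 ≤ |α|` and `|α| + deg q ≤ d`. The
multi-index `α` is encoded as the list of its indices with repetition, so that
`|α|` is the length and multiplication by `ξ_i` is `List.cons`. -/
noncomputable def taylorSpan (n d : ℕ) : Submodule ℝ ((Fin n → ℝ) → (Fin n → ℝ) → ℝ) :=
  Submodule.span ℝ {G | ∃ (α : List (Fin n)) (q : MvPolynomial (Fin n) ℝ),
    2 ≤ α.length ∧ α.length + q.totalDegree ≤ d ∧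
      G = fun x ξ => (α.map ξ).prod * eval x q}

theorem taylorSpan_mono {n d e : ℕ} (h : d ≤ e) : taylorSpan n d ≤ taylorSpan n e := by
  refine Submodule.span_mono ?_
  rintro G ⟨α, q, h1, h2, rfl⟩
  exact ⟨α, q, h1, h2.trans h, rfl⟩

theorem x_mul_mem_taylorSpan {n d : ℕ} (i : Fin n) {G : (Fin n → ℝ) → (Fin n → ℝ) → ℝ}
    (hG : G ∈ taylorSpan n d) : (fun x ξ => x i * G x ξ) ∈ taylorSpan n (d + 1) := by
  induction hG using Submodule.span_induction with
  | mem G h =>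
    obtain ⟨α, q, h1, h2, rfl⟩ := h
    refine Submodule.subset_span ⟨α, q * X i, h1, ?_, ?_⟩
    · have := totalDegree_mul q (X i)
      rw [totalDegree_X] at this
      omega
    · ext x ξ
      simp only [map_mul, eval_X]
      ring
  | zero =>
    convert (taylorSpan n (d + 1)).zero_mem using 1
    ext x ξ
    simp
  | add G H _ _ hG hH =>
    convert (taylorSpan n (d + 1)).add_mem hG hH using 1
    ext x ξ
    simp [mul_add]
  | smul c G _ hG =>
    convert (taylorSpan n (d + 1)).smul_mem c hG using 1
    ext x ξ
    simp only [Pi.smul_apply, smul_eq_mul]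
    ring

theorem xi_mul_mem_taylorSpan {n d : ℕ} (i : Fin n) {G : (Fin n → ℝ) → (Fin n → ℝ) → ℝ}
    (hG : G ∈ taylorSpan n d) : (fun x ξ => ξ i * G x ξ) ∈ taylorSpan n (d + 1) := by
  induction hG using Submodule.span_induction with
  | mem G h =>
    obtain ⟨α, q, h1, h2, rfl⟩ := h
    refine Submodule.subset_span ⟨i :: α, q, ?_, ?_, ?_⟩
    · simp only [List.length_cons]
      omega
    · simp only [List.length_cons]
      omega
    · ext x ξ
      simp [mul_assoc]
  | zero =>
    convert (taylorSpan n (d + 1)).zero_mem using 1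
    ext x ξ
    simp
  | add G H _ _ hG hH =>
    convert (taylorSpan n (d + 1)).add_mem hG hH using 1
    ext x ξ
    simp [mul_add]
  | smul c G _ hG =>
    convert (taylorSpan n (d + 1)).smul_mem c hG using 1
    ext x ξ
    simp only [Pi.smul_apply, smul_eq_mul]
    ring

theorem jumpIntegrand_C {n : ℕ} (c : ℝ) :
    jumpIntegrand (C c : MvPolynomial (Fin n) ℝ) = 0 := by
  ext x ξ
  simp [jumpIntegrand]

theorem jumpIntegrand_monomial_mem {n : ℕ} (s : Fin n →₀ ℕ) (c : ℝ) :
    jumpIntegrand (monomial s c) ∈ taylorSpan n (monomial s c).totalDegree := by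
  refine induction_on_monomial
    (motive := fun p => jumpIntegrand p ∈ taylorSpan n p.totalDegree) ?_ ?_ s c
  · intro c
    rw [jumpIntegrand_C]
    exact Submodule.zero_mem _
  · intro p i hp
    -- A constant `p` is treated apart: there `deg ∂_k p + 2 ≤ deg p + 1` fails.
    by_cases h0 : p.totalDegree = 0
    · have hz : jumpIntegrand (p * X i) = 0 := by
        rw [totalDegree_eq_zero_iff_eq_C.mp h0]
        ext x ξ
        simp [jumpIntegrand_mul_X, jumpIntegrand_C]
      rw [hz]
      exact Submodule.zero_mem _
    · have hp0 : p ≠ 0 := by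
        rintro rfl
        simp at h0
      have hd : (p * X i).totalDegree = p.totalDegree + 1 := by
        rw [totalDegree_mul_of_isDomain hp0 (X_ne_zero i), totalDegree_X]
      rw [hd]
      have he : jumpIntegrand (p * X i) =
          (fun x ξ => x i * jumpIntegrand p x ξ) + (fun x ξ => ξ i * jumpIntegrand p x ξ) +
            ∑ k, fun x ξ => ξ i * (ξ k * eval x (pderiv k p)) := by
        ext x ξ
        simp [jumpIntegrand_mul_X, Finset.sum_apply]
      rw [he]
      refine Submodule.add_mem _ (Submodule.add_mem _ (x_mul_mem_taylorSpan i hp)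
        (xi_mul_mem_taylorSpan i hp)) (Submodule.sum_mem _ fun k _ => ?_)
      refine Submodule.subset_span ⟨[i, k], pderiv k p, le_rfl, ?_, ?_⟩
      · have := totalDegree_pderiv_le_sub_one k p
        simp only [List.length_cons, List.length_nil]
        omega
      · ext x ξ
        simp [mul_assoc]

/-- Second-order Taylor expansion of a polynomial. -/
theorem jumpIntegrand_mem {n m : ℕ} (f : MvPolynomial (Fin n) ℝ) (hf : f.totalDegree ≤ m) :
    jumpIntegrand f ∈ taylorSpan n m := by
  let D : MvPolynomial (Fin n) ℝ →+ ((Fin n → ℝ) → (Fin n → ℝ) → ℝ) :=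
    AddMonoidHom.mk' jumpIntegrand jumpIntegrand_add
  change D f ∈ _
  rw [f.as_sum, map_sum]
  refine Submodule.sum_mem _ fun s hs => ?_
  refine taylorSpan_mono ?_ (jumpIntegrand_monomial_mem s _)
  rw [totalDegree_monomial _ (mem_support_iff.mp hs)]
  exact (le_totalDegree hs).trans hf

theorem norm_list_prod_le {n : ℕ} (α : List (Fin n)) (ξ : Fin n → ℝ) :
    ‖(α.map ξ).prod‖ ≤ ‖ξ‖ ^ α.length := by
  induction α with
  | nil => simp
  | cons i α ih =>
    rw [List.map_cons, List.prod_cons, norm_mul, List.length_cons, pow_succ']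
    exact mul_le_mul (norm_le_pi_norm ξ i) ih (norm_nonneg _) (norm_nonneg _)

theorem continuous_list_map_prod {n : ℕ} (α : List (Fin n)) :
    Continuous fun ξ : Fin n → ℝ => (α.map ξ).prod := by
  induction α with
  | nil => simpa using continuous_const
  | cons i α ih =>
    simp only [List.map_cons, List.prod_cons]
    exact (continuous_apply i).mul ih

theorem integrable_list_prod {n m : ℕ} {μ : Measure (Fin n → ℝ)}
    (hμ : IsLevyMeasureWithMoment n m μ) (α : List (Fin n)) (h2 : 2 ≤ α.length)
    (hm : α.length ≤ m) : Integrable (fun ξ : Fin n → ℝ => (α.map ξ).prod) μ := by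
  obtain ⟨-, -, hsmall, hlarge⟩ := hμ
  have hS : MeasurableSet {ξ : Fin n → ℝ | 1 < ‖ξ‖} :=
    measurableSet_lt measurable_const measurable_norm
  have i1 : Integrable (fun ξ : Fin n → ℝ => min (‖ξ‖ ^ 2) 1) μ := by
    refine ⟨by fun_prop, ?_⟩
    rw [hasFiniteIntegral_iff_ofReal (Filter.Eventually.of_forall fun ξ => by positivity)]
    exact hsmall
  have i2 : Integrable
      ({ξ : Fin n → ℝ | 1 < ‖ξ‖}.indicator fun ξ : Fin n → ℝ => ‖ξ‖ ^ m) μ := by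
    rw [integrable_indicator_iff hS]
    refine ⟨by fun_prop, ?_⟩
    rw [hasFiniteIntegral_iff_ofReal (Filter.Eventually.of_forall fun ξ => by positivity)]
    exact hlarge
  refine (i1.add i2).mono' (continuous_list_map_prod α).aestronglyMeasurable
    (Filter.Eventually.of_forall fun ξ => (norm_list_prod_le α ξ).trans ?_)
  by_cases h : 1 < ‖ξ‖
  · have h1 : ‖ξ‖ ^ α.length ≤ ‖ξ‖ ^ m := pow_le_pow_right₀ h.le hm
    have h3 : 0 ≤ min (‖ξ‖ ^ 2) 1 := by positivity
    simpa [h] using h1.trans (le_add_of_nonneg_left h3)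
  · have h' : ‖ξ‖ ≤ 1 := not_lt.mp h
    have h1 : ‖ξ‖ ^ α.length ≤ ‖ξ‖ ^ 2 := pow_le_pow_of_le_one (norm_nonneg _) h' h2
    have h3 : ‖ξ‖ ^ 2 ≤ 1 := pow_le_one₀ (norm_nonneg _) h'
    simp [h, h1, h1.trans h3]

/-- Integrating out `ξ` lowers the degree bound by at least two, since every term contains a
factor `ξ^α` with `2 ≤ |α|`. -/
theorem exists_polynomial_integral {n m : ℕ} {μ : Measure (Fin n → ℝ)}
    (hμ : IsLevyMeasureWithMoment n m μ) {G : (Fin n → ℝ) → (Fin n → ℝ) → ℝ}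
    (hG : G ∈ taylorSpan n m) :
    (∀ x, Integrable (G x) μ) ∧
      ∃ q : MvPolynomial (Fin n) ℝ, q.totalDegree ≤ m - 2 ∧
        ∀ x, eval x q = ∫ ξ, G x ξ ∂μ := by
  induction hG using Submodule.span_induction with
  | mem G h =>
    obtain ⟨α, q, h1, h2, rfl⟩ := h
    have hi := integrable_list_prod hμ α h1 (by omega)
    refine ⟨fun x => hi.mul_const _, (∫ ξ, (α.map ξ).prod ∂μ) • q, ?_, fun x => ?_⟩
    · have := totalDegree_smul_le (∫ ξ, (α.map ξ).prod ∂μ) q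
      omega
    · rw [integral_mul_const, smul_eval]
  | zero => exact ⟨fun x => integrable_zero _ _ _, 0, by simp, by simp⟩
  | add G H _ _ hG hH =>
    obtain ⟨iG, p, hp, ep⟩ := hG
    obtain ⟨iH, q, hq, eq⟩ := hH
    refine ⟨fun x => (iG x).add (iH x), p + q,
      (totalDegree_add p q).trans (max_le hp hq), fun x => ?_⟩
    rw [map_add, ep, eq, ← integral_add (iG x) (iH x)]
    rfl
  | smul c G _ hG =>
    obtain ⟨iG, p, hp, ep⟩ := hG
    refine ⟨fun x => (iG x).smul c, c • p, (totalDegree_smul_le c p).trans hp, fun x => ?_⟩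
    rw [smul_eval, ep, ← integral_const_mul]
    rfl

/-- The key claim in the proof of Theorem 3.5 under Condition A: the full generator with
quadratic diffusion coefficients `a_{kl}`, affine drift `b_k` and jump kernel
`K(x,dξ) = μ₀₀(dξ) + Σ_{i∈I} x_i μ_{i0}(dξ) + Σ_{(i,j)∈J} x_i x_j μ_{ij}(dξ)` is well
defined on polynomials of total degree `≤ m` and maps them to polynomials of total
degree `≤ m`. -/
theorem generator_conditionA_polynomial (n m : ℕ) (hn : 1 ≤ n) (hm : 2 ≤ m)
    (a : Fin n → Fin n → MvPolynomial (Fin n) ℝ) (ha : ∀ k l, (a k l).totalDegree ≤ 2)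
    (b : Fin n → MvPolynomial (Fin n) ℝ) (hb : ∀ k, (b k).totalDegree ≤ 1)
    (I : Finset (Fin n)) (J : Finset (Fin n × Fin n))
    (μ00 : Measure (Fin n → ℝ)) (μI : Fin n → Measure (Fin n → ℝ))
    (μJ : Fin n × Fin n → Measure (Fin n → ℝ))
    (h00 : IsLevyMeasureWithMoment n m μ00)
    (hI : ∀ i ∈ I, IsLevyMeasureWithMoment n m (μI i))
    (hJ : ∀ q ∈ J, IsLevyMeasureWithMoment n m (μJ q))
    (f : MvPolynomial (Fin n) ℝ) (hf : f.totalDegree ≤ m) :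
    (∀ x : Fin n → ℝ,
      Integrable (jumpIntegrand f x) μ00 ∧
      (∀ i ∈ I, Integrable (jumpIntegrand f x) (μI i)) ∧
      (∀ q ∈ J, Integrable (jumpIntegrand f x) (μJ q))) ∧
    (∃ g : MvPolynomial (Fin n) ℝ, g.totalDegree ≤ m ∧
      ∀ x : Fin n → ℝ,
        eval x g =
          (1 / 2) * ∑ k, ∑ l, eval x (a k l) * eval x (pderiv k (pderiv l f)) +
          (∑ k, eval x (b k) * eval x (pderiv k f)) +
          (∫ ξ, jumpIntegrand f x ξ ∂μ00) +
          (∑ i ∈ I, x i * ∫ ξ, jumpIntegrand f x ξ ∂(μI i)) +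
          (∑ q ∈ J, x q.1 * x q.2 * ∫ ξ, jumpIntegrand f x ξ ∂(μJ q))) := by
  have key : ∀ ν : Measure (Fin n → ℝ), IsLevyMeasureWithMoment n m ν → _ :=
    fun ν hν => exists_polynomial_integral hν (jumpIntegrand_mem f hf)
  refine ⟨fun x => ⟨(key _ h00).1 x, fun i hi => (key _ (hI i hi)).1 x,
    fun q hq => (key _ (hJ q hq)).1 x⟩, ?_⟩
  obtain ⟨-, g0, hg0, e0⟩ := key _ h00
  choose! gI hgI eI using fun i hi => (key _ (hI i hi)).2
  choose! gJ hgJ eJ using fun q hq => (key _ (hJ q hq)).2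
  refine ⟨C (1 / 2) * ∑ k, ∑ l, a k l * pderiv k (pderiv l f) + ∑ k, b k * pderiv k f + g0 +
    ∑ i ∈ I, X i * gI i + ∑ q ∈ J, X q.1 * X q.2 * gJ q, ?_, fun x => ?_⟩
  · have hX : ∀ i : Fin n, (X i : MvPolynomial (Fin n) ℝ).totalDegree = 1 := totalDegree_X
    refine (totalDegree_add _ _).trans (max_le ((totalDegree_add _ _).trans (max_le
      ((totalDegree_add _ _).trans (max_le ((totalDegree_add _ _).trans (max_le ?_ ?_)) ?_)) ?_))
        ?_)
    · refine (totalDegree_mul _ _).trans ?_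
      rw [totalDegree_C, zero_add]
      refine totalDegree_finsetSum_le fun k _ => totalDegree_finsetSum_le fun l _ => ?_
      have h1 := totalDegree_mul (a k l) (pderiv k (pderiv l f))
      have h2 := totalDegree_pderiv_le_sub_one k (pderiv l f)
      have h3 := totalDegree_pderiv_le_sub_one l f
      have h4 := ha k l
      omega
    · refine totalDegree_finsetSum_le fun k _ => ?_
      have h1 := totalDegree_mul (b k) (pderiv k f)
      have h2 := totalDegree_pderiv_le_sub_one k f
      have h3 := hb k
      omega
    · omega
    · refine totalDegree_finsetSum_le fun i hi => ?_
      have h1 := totalDegree_mul (X i) (gI i)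
      have h2 := hgI i hi
      have h3 := hX i
      omega
    · refine totalDegree_finsetSum_le fun q hq => ?_
      have h1 := totalDegree_mul (X q.1 * X q.2) (gJ q)
      have h2 := totalDegree_mul (X q.1 : MvPolynomial (Fin n) ℝ) (X q.2)
      have h3 := hgJ q hq
      have h4 := hX q.1
      have h5 := hX q.2
      omega
  · simp only [map_add, map_mul, map_sum, eval_C, eval_X, e0]
    congr 1
    · congr 1
      exact Finset.sum_congr rfl fun i hi => by rw [eI i hi]
    · exact Finset.sum_congr rfl fun q hq => by rw [eJ q hq]
end

section
/- Let m ≥ 2, let μ be a σ-finite measure on ℝ \ {0} with ∫_{|y| ≤ 1} y² μ(dy) < ∞, μ({ y : |y| > 1 }) < ∞ and ∫_{|y| > 1} e^{m y} μ(dy) < ∞, and let a, r ∈ ℝ. Then for every real polynomial u (in one variable) of degree ≤ m and every x ∈ ℝ, the function y ↦ u(x e^y) − u(x) − x (e^y − 1) u'(x) is μ-integrable, and the map x ↦ (a x² / 2) u''(x) + r x u'(x) + ∫ ( u(x e^y) − u(x) − x (e^y − 1) u'(x) ) μ(dy) is a polynomial of degree ≤ m. -/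
open MeasureTheory Polynomial

/-!
The generator is diagonal on monomials: for `u = X ^ k` the integrand is `x ^ k * φₖ y` with
`φₖ y = e^{ky} - 1 - k (e^y - 1)`, so by linearity everything reduces to the `μ`-integrability of
`φₖ` for `k ≤ m`, and the integral term multiplies the coefficient of `X ^ k` by `∫ φₖ ∂μ`.
With `t = e^y`, the recursion `φₖ₊₁ = t φₖ + k (t - 1) ^ 2` shows `0 ≤ φₖ` and, as
`|e^y - 1| ≤ 2 |y|` for `|y| ≤ 1`, that `φₖ y ≤ C y ^ 2` near the origin. For `|y| > 1` the
domination is `φₖ y ≤ e^{my} + 1 + k`.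
-/

/-- The function `e^{ky} - 1 - k (e^y - 1)`: the jump integrand for `X ^ k`, evaluated at
`x = 1`. -/
noncomputable def levyMonomial (k : ℕ) (y : ℝ) : ℝ :=
  Real.exp y ^ k - 1 - k * (Real.exp y - 1)

lemma levyMonomial_succ (k : ℕ) (y : ℝ) :
    levyMonomial (k + 1) y = Real.exp y * levyMonomial k y + k * (Real.exp y - 1) ^ 2 := by
  simp only [levyMonomial]
  push_cast
  ring

lemma levyMonomial_nonneg (k : ℕ) (y : ℝ) : 0 ≤ levyMonomial k y := by
  induction k with
  | zero => simp [levyMonomial]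
  | succ k ih =>
    rw [levyMonomial_succ]
    positivity

lemma levyMonomial_small (k : ℕ) :
    ∃ C : ℝ, 0 ≤ C ∧ ∀ y : ℝ, |y| ≤ 1 → levyMonomial k y ≤ C * y ^ 2 := by
  induction k with
  | zero => exact ⟨0, le_rfl, fun y _ => by simp [levyMonomial]⟩
  | succ k ih =>
    obtain ⟨C, hC, h⟩ := ih
    refine ⟨Real.exp 1 * C + k * 4, by positivity, fun y hy => ?_⟩
    rw [levyMonomial_succ]
    have h1 : Real.exp y ≤ Real.exp 1 := Real.exp_le_exp.2 (le_trans (le_abs_self y) hy)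
    have h2 : (Real.exp y - 1) ^ 2 ≤ 4 * y ^ 2 := by
      have h3 : |Real.exp y - 1| ≤ |2 * y| := by
        rw [abs_mul, abs_two]
        exact Real.abs_exp_sub_one_le hy
      calc (Real.exp y - 1) ^ 2 ≤ (2 * y) ^ 2 := sq_le_sq.2 h3
        _ = 4 * y ^ 2 := by ring
    calc Real.exp y * levyMonomial k y + k * (Real.exp y - 1) ^ 2
        ≤ Real.exp 1 * (C * y ^ 2) + k * (4 * y ^ 2) := by
          gcongr
          · exact levyMonomial_nonneg k y
          · exact h y hy
      _ = (Real.exp 1 * C + k * 4) * y ^ 2 := by ring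

lemma levyMonomial_large {k m : ℕ} (hk : k ≤ m) (y : ℝ) :
    levyMonomial k y ≤ Real.exp (m * y) + (1 + k) := by
  have ht := Real.exp_pos y
  have h1 : Real.exp y ^ k ≤ Real.exp y ^ m + 1 := by
    rcases le_total 1 (Real.exp y) with h | h
    · linarith [pow_le_pow_right₀ h hk]
    · linarith [pow_le_one₀ ht.le h (n := k), pow_pos ht m]
  have h2 : 0 ≤ (k : ℝ) * Real.exp y := by positivity
  rw [Real.exp_nat_mul]
  simp only [levyMonomial]
  linarith

lemma integrable_levyMonomial {m : ℕ} {μ : Measure ℝ}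
    (hsmall : (∫⁻ y in {y : ℝ | |y| ≤ 1}, ENNReal.ofReal (y ^ 2) ∂μ) < ⊤)
    (hbigfin : μ {y : ℝ | 1 < |y|} < ⊤)
    (hexp : (∫⁻ y in {y : ℝ | 1 < |y|}, ENNReal.ofReal (Real.exp (m * y)) ∂μ) < ⊤)
    {k : ℕ} (hk : k ≤ m) : Integrable (levyMonomial k) μ := by
  have hmeas : Measurable (levyMonomial k) := by
    unfold levyMonomial
    fun_prop
  have hS : MeasurableSet {y : ℝ | |y| ≤ 1} := measurableSet_le (by fun_prop) (by fun_prop)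
  have hB : MeasurableSet {y : ℝ | 1 < |y|} := measurableSet_lt (by fun_prop) (by fun_prop)
  have hsq : IntegrableOn (fun y : ℝ => y ^ 2) {y : ℝ | |y| ≤ 1} μ :=
    ⟨by fun_prop, (hasFiniteIntegral_iff_ofReal (.of_forall fun y => sq_nonneg y)).2 hsmall⟩
  have hex : IntegrableOn (fun y : ℝ => Real.exp (m * y)) {y : ℝ | 1 < |y|} μ :=
    ⟨by fun_prop, (hasFiniteIntegral_iff_ofReal (.of_forall fun y => (Real.exp_pos _).le)).2 hexp⟩
  obtain ⟨C, -, hC⟩ := levyMonomial_small k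
  have h1 : IntegrableOn (levyMonomial k) {y : ℝ | |y| ≤ 1} μ := by
    refine (hsq.const_mul C).mono' hmeas.aestronglyMeasurable ?_
    filter_upwards [ae_restrict_mem hS] with y hy
    rw [Real.norm_of_nonneg (levyMonomial_nonneg k y)]
    exact hC y hy
  have h2 : IntegrableOn (levyMonomial k) {y : ℝ | 1 < |y|} μ := by
    refine (hex.add (integrableOn_const (C := (1 + k : ℝ)) hbigfin.ne)).mono'
      hmeas.aestronglyMeasurable (.of_forall fun y => ?_)
    rw [Real.norm_of_nonneg (levyMonomial_nonneg k y)]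
    exact levyMonomial_large hk y
  rw [← integrableOn_univ]
  convert h1.union h2
  ext y
  simp [le_or_gt]

lemma levy_integrand_eq_sum {m : ℕ} {u : ℝ[X]} (hu : u.natDegree ≤ m) (x y : ℝ) :
    u.eval (x * Real.exp y) - u.eval x - x * (Real.exp y - 1) * (derivative u).eval x =
      ∑ k ∈ Finset.range (m + 1), u.coeff k * x ^ k * levyMonomial k y := by
  have hd : x * (derivative u).eval x =
      ∑ k ∈ Finset.range (m + 1), u.coeff k * k * x ^ k := by
    conv_lhs => rw [u.as_sum_range' (m + 1) (by omega)]
    simp only [derivative_sum, derivative_monomial, eval_finsetSum, eval_monomial,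
      Finset.mul_sum]
    refine Finset.sum_congr rfl fun k _ => ?_
    cases k with
    | zero => simp
    | succ k =>
      simp only [Nat.add_sub_cancel]
      ring
  have h : x * (Real.exp y - 1) * (derivative u).eval x =
      (Real.exp y - 1) * (x * (derivative u).eval x) := by ring
  rw [h, hd, eval_eq_sum_range' (n := m + 1) (by omega), eval_eq_sum_range' (n := m + 1) (by omega),
    Finset.mul_sum, ← Finset.sum_sub_distrib, ← Finset.sum_sub_distrib]
  refine Finset.sum_congr rfl fun k _ => ?_
  simp only [levyMonomial]
  ring

/-- Example 4.3 of the paper (exponential Lévy models): if the Lévy measure `μ`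
satisfies `∫_{|y|>1} e^{my} μ(dy) < ∞`, then for every polynomial `u` of degree `≤ m`
the generator integrand `y ↦ u(x e^y) − u(x) − x(e^y − 1)u'(x)` is `μ`-integrable and
`x ↦ (a x²/2) u''(x) + r x u'(x) + ∫ (u(x e^y) − u(x) − x(e^y − 1)u'(x)) μ(dy)` is a
polynomial of degree `≤ m`. -/
theorem exponential_levy_generator_polynomial (m : ℕ) (hm : 2 ≤ m)
    (μ : Measure ℝ) [SigmaFinite μ] (h0 : μ {0} = 0)
    (hsmall : (∫⁻ y in {y : ℝ | |y| ≤ 1}, ENNReal.ofReal (y ^ 2) ∂μ) < ⊤)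
    (hbigfin : μ {y : ℝ | 1 < |y|} < ⊤)
    (hexp : (∫⁻ y in {y : ℝ | 1 < |y|}, ENNReal.ofReal (Real.exp (m * y)) ∂μ) < ⊤)
    (a r : ℝ)
    (u : Polynomial ℝ) (hu : u.natDegree ≤ m) :
    (∀ x : ℝ,
      Integrable (fun y : ℝ =>
        u.eval (x * Real.exp y) - u.eval x -
          x * (Real.exp y - 1) * (derivative u).eval x) μ) ∧
    (∃ g : Polynomial ℝ, g.natDegree ≤ m ∧
      ∀ x : ℝ,
        g.eval x =
          a * x ^ 2 / 2 * (derivative (derivative u)).eval x +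
          r * x * (derivative u).eval x +
          ∫ y, (u.eval (x * Real.exp y) - u.eval x -
            x * (Real.exp y - 1) * (derivative u).eval x) ∂μ) := by
  have hint : ∀ x : ℝ, ∀ k ∈ Finset.range (m + 1),
      Integrable (fun y => u.coeff k * x ^ k * levyMonomial k y) μ := fun x k hk =>
    (integrable_levyMonomial hsmall hbigfin hexp
      (Nat.lt_succ_iff.1 (Finset.mem_range.1 hk))).const_mul _
  simp only [levy_integrand_eq_sum hu]
  refine ⟨fun x => integrable_finsetSum _ (hint x), ?_⟩
  refine ⟨C (a / 2) * (X ^ 2 * derivative (derivative u)) + C r * (X * derivative u) +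
    ∑ k ∈ Finset.range (m + 1), C (u.coeff k * ∫ y, levyMonomial k y ∂μ) * X ^ k, ?_, ?_⟩
  · have hd1 := natDegree_derivative_le u
    have hd2 := natDegree_derivative_le (derivative u)
    refine natDegree_add_le_of_degree_le (natDegree_add_le_of_degree_le ?_ ?_) ?_
    · refine (natDegree_C_mul_le _ _).trans (natDegree_mul_le.trans ?_)
      rw [natDegree_X_pow]
      omega
    · refine (natDegree_C_mul_le _ _).trans (natDegree_mul_le.trans ?_)
      rw [natDegree_X]
      omega
    · refine natDegree_sum_le_of_forall_le _ _ fun k hk => ?_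
      exact (natDegree_C_mul_X_pow_le _ _).trans (Nat.lt_succ_iff.1 (Finset.mem_range.1 hk))
  · intro x
    rw [integral_finsetSum _ (hint x)]
    simp only [integral_const_mul, eval_add, eval_mul, eval_C, eval_pow, eval_X, eval_finsetSum]
    congr 1
    · ring
    · exact Finset.sum_congr rfl fun k _ => by ring
end
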